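/- Let $X_1, \dots, X_n$ be a martingale difference sequence adapted to a filtration with $|X_k| \le R$ almost surely, and let $W_n = \sum_{k=1}^n \mathbb{E}[X_k^2 \mid \mathcal{F}_{k-1}]$ satisfy $W_n \le \sigma^2$ deterministically. Then for any integer $m \ge 1$, with probability at least $1 - \delta$, $\left|\sum_{k=1}^n X_k\right| \le \sqrt{8 \max\{W_n, \sigma^2/2^m\} \log(2m/\delta)} + \frac{4}{3} R \log(2m/\delta)$. -/

import Mathlib

open MeasureTheory ProbabilityTheory

lemma aux_peel (W s : ℝ) (hs : 0 ≤ s) (hW : W ≤ s) (m : ℕ) (hm : 1 ≤ m) :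
    ∃ j ∈ Finset.range m, W ≤ s / 2 ^ j ∧ s / 2 ^ j ≤ 2 * max W (s / 2 ^ m) := by
  induction m, hm using Nat.le_induction with
  | base =>
    refine ⟨0, by simp, by simpa using hW, ?_⟩
    have := le_max_right W (s / 2 ^ 1)
    simp only [pow_one, pow_zero, div_one] at this ⊢
    linarith
  | succ m hm ih =>
    by_cases h : W ≤ s / 2 ^ m
    · refine ⟨m, by simp, h, ?_⟩
      have h1 := le_max_right W (s / 2 ^ (m + 1))
      have h2 : s / 2 ^ m = 2 * (s / 2 ^ (m + 1)) := by
        rw [pow_succ]; field_simp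
      linarith
    · obtain ⟨j, hj, h1, h2⟩ := ih
      refine ⟨j, by simp at hj ⊢; omega, h1, ?_⟩
      rw [max_eq_left (not_le.mp h).le] at h2
      have := le_max_left W (s / 2 ^ (m + 1))
      linarith

lemma aux_lam (R v L : ℝ) (hR : 0 < R) (hv : 0 ≤ v) (hL : 0 < L) :
    ∃ l : ℝ, 0 < l ∧ l * R ≤ 1 ∧
      L ≤ l * (Real.sqrt (4 * v * L) + 4 / 3 * R * L) - l ^ 2 * v := by
  obtain ⟨a, ha, rfl⟩ : ∃ a : ℝ, 0 ≤ a ∧ v = a ^ 2 :=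
    ⟨_, Real.sqrt_nonneg v, (Real.sq_sqrt hv).symm⟩
  obtain ⟨b, hb, rfl⟩ : ∃ b : ℝ, 0 < b ∧ L = b ^ 2 :=
    ⟨_, Real.sqrt_pos.2 hL, (Real.sq_sqrt hL.le).symm⟩
  have hs : Real.sqrt (4 * a ^ 2 * b ^ 2) = 2 * a * b := by
    rw [show 4 * a ^ 2 * b ^ 2 = (2 * a * b) ^ 2 by ring]
    exact Real.sqrt_sq (by positivity)
  rw [hs]
  by_cases h : b * R ≤ a
  · have ha' : 0 < a := lt_of_lt_of_le (by positivity) h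
    refine ⟨b / a, by positivity, ?_, ?_⟩
    · rw [div_mul_eq_mul_div, div_le_one ha']; exact h
    · have : b / a * (2 * a * b + 4 / 3 * R * b ^ 2) - (b / a) ^ 2 * a ^ 2
        = b ^ 2 + 4 / 3 * R * b ^ 3 / a := by field_simp; ring
      rw [this]
      have : 0 ≤ 4 / 3 * R * b ^ 3 / a := by positivity
      linarith
  · push Not at h
    refine ⟨1 / R, by positivity, by field_simp; exact le_rfl, ?_⟩
    have h1 : a / R ≤ b := by rw [div_le_iff₀ hR]; exact h.le
    have h0 : 0 ≤ a / R := by positivity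
    have : 1 / R * (2 * a * b + 4 / 3 * R * b ^ 2) - (1 / R) ^ 2 * a ^ 2
        = 4 / 3 * b ^ 2 + a / R * (2 * b - a / R) := by field_simp; ring
    rw [this]
    have : 0 ≤ a / R * (2 * b - a / R) := mul_nonneg h0 (by linarith)
    nlinarith

lemma aux_exp {Ω : Type*} {m0 : MeasurableSpace Ω}
    (μ : Measure Ω) [IsProbabilityMeasure μ]
    (ℱ : Filtration ℕ m0) (X : ℕ → Ω → ℝ) (R : ℝ)
    (hadapted : Adapted ℱ X)
    (hmeas : ∀ k, Measurable (X k))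
    (hmds : ∀ k, 1 ≤ k → μ[X k | ℱ (k - 1)] =ᵐ[μ] 0)
    (hbdd : ∀ k, 1 ≤ k → ∀ᵐ ω ∂μ, |X k ω| ≤ R)
    (l : ℝ) (hl : |l| * R ≤ 1) (n : ℕ) :
    (∃ C, ∀ᵐ ω ∂μ, Real.exp (∑ k ∈ Finset.Icc 1 n,
        (l * X k ω - l ^ 2 * (μ[(X k) ^ 2 | ℱ (k - 1)]) ω)) ≤ C) ∧
    ∫ ω, Real.exp (∑ k ∈ Finset.Icc 1 n,
        (l * X k ω - l ^ 2 * (μ[(X k) ^ 2 | ℱ (k - 1)]) ω)) ∂μ ≤ 1 := by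
  induction n with
  | zero => exact ⟨⟨1, by simp⟩, by simp⟩
  | succ n ih =>
    obtain ⟨⟨C, hC⟩, ih⟩ := ih
    have hb := hbdd (n + 1) (by omega)
    have hmd := hmds (n + 1) (by omega)
    simp only [Nat.add_sub_cancel] at hmd
    simp only [Finset.sum_Icc_succ_top (Nat.le_add_left 1 n), Nat.add_sub_cancel]
    set A : Ω → ℝ := fun ω => ∑ k ∈ Finset.Icc 1 n,
        (l * X k ω - l ^ 2 * (μ[(X k) ^ 2 | ℱ (k - 1)]) ω) with hA
    set V : Ω → ℝ := μ[(X (n + 1)) ^ 2 | ℱ n] with hV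
    have hV0 : 0 ≤ᵐ[μ] V := condExp_nonneg (Filter.Eventually.of_forall fun ω => sq_nonneg _)
    have hVm : StronglyMeasurable[ℱ n] V := stronglyMeasurable_condExp
    have hAm : StronglyMeasurable[ℱ n] A := by
      refine Finset.stronglyMeasurable_fun_sum _ fun k hk => ?_
      rw [Finset.mem_Icc] at hk
      refine StronglyMeasurable.sub ?_ ?_
      · exact ((hadapted k).stronglyMeasurable.mono (ℱ.mono hk.2)).const_mul l
      · exact (stronglyMeasurable_condExp.mono (ℱ.mono (by omega))).const_mul _
    set Y : Ω → ℝ := fun ω => Real.exp (A ω - l ^ 2 * V ω) with hY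
    have hYm : StronglyMeasurable[ℱ n] Y :=
      Real.continuous_exp.comp_stronglyMeasurable (hAm.sub (hVm.const_mul _))
    have hYC : ∀ᵐ ω ∂μ, Y ω ≤ C := by
      filter_upwards [hC, hV0] with ω h1 h2
      refine le_trans (Real.exp_le_exp.2 ?_) h1
      have : 0 ≤ l ^ 2 * V ω := mul_nonneg (sq_nonneg _) h2
      linarith
    have hXi : Integrable (X (n + 1)) μ :=
      Integrable.of_bound (hmeas _).aestronglyMeasurable R (by simpa using hb)
    have hX2i : Integrable ((X (n + 1)) ^ 2) μ :=
      Integrable.of_bound ((hmeas _).pow_const 2).aestronglyMeasurable (R ^ 2) (by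
        filter_upwards [hb] with ω h
        simp only [Pi.pow_apply, Real.norm_eq_abs, abs_pow]
        gcongr)
    set Z : Ω → ℝ := (fun _ => (1:ℝ)) + (l • X (n + 1) + l ^ 2 • (X (n + 1)) ^ 2) with hZ
    have hZi : Integrable Z μ :=
      (integrable_const _).add ((hXi.smul l).add (hX2i.smul (l ^ 2)))
    have hYi : ∀ {f : Ω → ℝ}, Integrable f μ → Integrable (Y * f) μ := by
      intro f hf
      refine hf.bdd_mul (c := C) (hYm.mono (ℱ.le n)).aestronglyMeasurable ?_
      filter_upwards [hYC] with ω h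
      rwa [Real.norm_eq_abs, abs_of_pos (Real.exp_pos _)]
    have hZc : μ[Z | ℱ n] =ᵐ[μ] fun ω => 1 + l ^ 2 * V ω := by
      have e1 := condExp_add (μ := μ) (integrable_const (1:ℝ))
        ((hXi.smul l).add (hX2i.smul (l ^ 2))) (ℱ n)
      have e2 := condExp_add (μ := μ) (hXi.smul l) (hX2i.smul (l ^ 2)) (ℱ n)
      have e3 := condExp_smul (μ := μ) l (X (n + 1)) (ℱ n)
      have e4 := condExp_smul (μ := μ) (l ^ 2) ((X (n + 1)) ^ 2) (ℱ n)
      have e5 := condExp_const (μ := μ) (ℱ.le n) (1:ℝ)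
      filter_upwards [e1, e2, e3, e4, hmd] with ω h1 h2 h3 h4 h5
      rw [h1, Pi.add_apply, h2, Pi.add_apply, h3, h4, e5]
      simp only [Pi.smul_apply, h5, smul_eq_mul, Pi.zero_apply, mul_zero, zero_add]
      rfl
    have hYZ : μ[Y * Z | ℱ n] =ᵐ[μ] Y * μ[Z | ℱ n] :=
      condExp_mul_of_stronglyMeasurable_left hYm (hYi hZi) hZi
    have hlX : ∀ᵐ ω ∂μ, |l * X (n + 1) ω| ≤ 1 := by
      filter_upwards [hb] with ω h
      rw [abs_mul]
      exact le_trans (mul_le_mul_of_nonneg_left h (abs_nonneg _)) hl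
    have heq : ∀ ω, Real.exp (A ω + (l * X (n + 1) ω - l ^ 2 * V ω))
        = Y ω * Real.exp (l * X (n + 1) ω) := by
      intro ω; rw [hY, ← Real.exp_add]; congr 1; ring
    have hle : ∀ᵐ ω ∂μ, Y ω * Real.exp (l * X (n + 1) ω) ≤ (Y * Z) ω := by
      filter_upwards [hlX] with ω h
      have := (abs_le.1 (Real.abs_exp_sub_one_sub_id_le h)).2
      refine mul_le_mul_of_nonneg_left ?_ (Real.exp_pos _).le
      simp only [hZ, Pi.add_apply, Pi.smul_apply, Pi.pow_apply, smul_eq_mul]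
      nlinarith
    have hAi : Integrable (fun ω => Real.exp (A ω)) μ :=
      Integrable.of_bound (Real.continuous_exp.comp_stronglyMeasurable
        (hAm.mono (ℱ.le n))).aestronglyMeasurable C (by
          filter_upwards [hC] with ω h
          rwa [Real.norm_eq_abs, abs_of_pos (Real.exp_pos _)])
    change (∃ C, ∀ᵐ ω ∂μ, Real.exp (A ω + (l * X (n + 1) ω - l ^ 2 * V ω)) ≤ C) ∧
      ∫ ω, Real.exp (A ω + (l * X (n + 1) ω - l ^ 2 * V ω)) ∂μ ≤ 1
    simp only [heq]
    constructor
    · refine ⟨C * Real.exp 1, ?_⟩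
      filter_upwards [hYC, hlX] with ω h1 h2
      have : 0 ≤ C := (Real.exp_pos _).le.trans h1
      exact mul_le_mul h1 (Real.exp_le_exp.2 (abs_le.1 h2).2) (Real.exp_pos _).le this
    · calc ∫ ω, Y ω * Real.exp (l * X (n + 1) ω) ∂μ
          ≤ ∫ ω, (Y * Z) ω ∂μ := integral_mono_of_nonneg
            (Filter.Eventually.of_forall fun ω =>
              mul_nonneg (Real.exp_pos _).le (Real.exp_pos _).le) (hYi hZi) hle
        _ = ∫ ω, (μ[Y * Z | ℱ n]) ω ∂μ := (integral_condExp (ℱ.le n)).symm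
        _ ≤ ∫ ω, Real.exp (A ω) ∂μ := by
            refine integral_mono_ae integrable_condExp hAi ?_
            filter_upwards [hYZ, hZc] with ω h1 h2
            rw [h1, Pi.mul_apply, h2]
            have : Real.exp (A ω) = Y ω * Real.exp (l ^ 2 * V ω) := by
              rw [hY, ← Real.exp_add]; congr 1; ring
            rw [this]
            refine mul_le_mul_of_nonneg_left ?_ (Real.exp_pos _).le
            have := Real.add_one_le_exp (l ^ 2 * V ω)
            linarith
        _ ≤ 1 := ih

lemma aux_markov {Ω : Type*} {m0 : MeasurableSpace Ω}
    (μ : Measure Ω) [IsProbabilityMeasure μ]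
    (ℱ : Filtration ℕ m0) (X : ℕ → Ω → ℝ) (R : ℝ)
    (hadapted : Adapted ℱ X)
    (hmeas : ∀ k, Measurable (X k))
    (hmds : ∀ k, 1 ≤ k → μ[X k | ℱ (k - 1)] =ᵐ[μ] 0)
    (hbdd : ∀ k, 1 ≤ k → ∀ᵐ ω ∂μ, |X k ω| ≤ R)
    (l : ℝ) (hl : |l| * R ≤ 1) (n : ℕ) (L : ℝ) :
    μ {ω | L ≤ l * ∑ k ∈ Finset.Icc 1 n, X k ω -
      l ^ 2 * ∑ k ∈ Finset.Icc 1 n, (μ[(X k) ^ 2 | ℱ (k - 1)]) ω}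
      ≤ ENNReal.ofReal (Real.exp (-L)) := by
  obtain ⟨⟨C, hC⟩, hI⟩ := aux_exp μ ℱ X R hadapted hmeas hmds hbdd l hl n
  have hm : Measurable (fun ω => Real.exp (∑ k ∈ Finset.Icc 1 n,
        (l * X k ω - l ^ 2 * (μ[(X k) ^ 2 | ℱ (k - 1)]) ω))) := by
    refine Real.measurable_exp.comp (Finset.measurable_fun_sum _ fun k _ => ?_)
    exact ((hmeas k).const_mul l).sub
      ((stronglyMeasurable_condExp.mono (ℱ.le _)).measurable.const_mul _)
  have hi : Integrable (fun ω => Real.exp (∑ k ∈ Finset.Icc 1 n,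
        (l * X k ω - l ^ 2 * (μ[(X k) ^ 2 | ℱ (k - 1)]) ω))) μ :=
    Integrable.of_bound hm.aestronglyMeasurable C (by
      filter_upwards [hC] with ω h
      rwa [Real.norm_eq_abs, abs_of_pos (Real.exp_pos _)])
  have := mul_meas_ge_le_integral_of_nonneg
    (Filter.Eventually.of_forall fun ω => (Real.exp_pos _).le) hi (Real.exp L)
  rw [← ofReal_measureReal]
  apply ENNReal.ofReal_le_ofReal
  rw [Real.exp_neg, ← one_div, le_div_iff₀ (Real.exp_pos _), mul_comm]
  refine le_trans ?_ (this.trans hI)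
  simp only [Real.exp_le_exp, Finset.sum_sub_distrib, Finset.mul_sum]
  exact le_rfl

lemma aux_tail {Ω : Type*} {m0 : MeasurableSpace Ω}
    (μ : Measure Ω) [IsProbabilityMeasure μ]
    (ℱ : Filtration ℕ m0) (X : ℕ → Ω → ℝ) (R : ℝ) (hR : 0 < R)
    (hadapted : Adapted ℱ X)
    (hmeas : ∀ k, Measurable (X k))
    (hmds : ∀ k, 1 ≤ k → μ[X k | ℱ (k - 1)] =ᵐ[μ] 0)
    (hbdd : ∀ k, 1 ≤ k → ∀ᵐ ω ∂μ, |X k ω| ≤ R)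
    (n : ℕ) (L v : ℝ) (hL : 0 < L) (hv : 0 ≤ v) :
    μ {ω | Real.sqrt (4 * v * L) + 4 / 3 * R * L < |∑ k ∈ Finset.Icc 1 n, X k ω| ∧
      ∑ k ∈ Finset.Icc 1 n, (μ[(X k) ^ 2 | ℱ (k - 1)]) ω ≤ v}
      ≤ ENNReal.ofReal (2 * Real.exp (-L)) := by
  obtain ⟨l, hl0, hl1, hl⟩ := aux_lam R v L hR hv hL
  have h1 := aux_markov μ ℱ X R hadapted hmeas hmds hbdd l (by rwa [abs_of_pos hl0]) n L
  have h2 := aux_markov μ ℱ X R hadapted hmeas hmds hbdd (-l)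
    (by rwa [abs_neg, abs_of_pos hl0]) n L
  rw [two_mul, ENNReal.ofReal_add (Real.exp_pos _).le (Real.exp_pos _).le]
  refine le_trans (measure_mono ?_) ((measure_union_le _ _).trans (add_le_add h1 h2))
  rintro ω ⟨ha, hb⟩
  have hb' := mul_le_mul_of_nonneg_left hb (sq_nonneg l)
  rcases lt_abs.1 ha with h | h
  · left
    have := mul_le_mul_of_nonneg_left h.le hl0.le
    simp only [Set.mem_ofPred_eq]
    linarith
  · right
    have := mul_le_mul_of_nonneg_left h.le hl0.le
    simp only [Set.mem_ofPred_eq, neg_sq]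
    linarith


/-- Freedman's inequality (user-friendly form): for a martingale difference
sequence `X 1, …, X n` adapted to a filtration `ℱ`, with `|X k| ≤ R`
almost surely and predictable quadratic variation
`W n = ∑_{k=1}^n E[X k ^ 2 | ℱ (k-1)]` bounded deterministically by `σ²`,
for any integer `m ≥ 1`, with probability at least `1 - δ`,
`|∑_{k=1}^n X k| ≤ √(8 max{W n, σ²/2^m} log(2m/δ)) + (4/3) R log(2m/δ)`. -/
theorem stmt_12 {Ω : Type*} {m0 : MeasurableSpace Ω}
    (μ : Measure Ω) [IsProbabilityMeasure μ]
    (ℱ : Filtration ℕ m0) (X : ℕ → Ω → ℝ) (n : ℕ)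
    (R σ δ : ℝ) (hR : 0 ≤ R) (hσ : 0 ≤ σ) (hδ : 0 < δ) (hδ1 : δ < 1)
    (hadapted : Adapted ℱ X)
    (hmeas : ∀ k, Measurable (X k))
    (hmds : ∀ k, 1 ≤ k → μ[X k | ℱ (k - 1)] =ᵐ[μ] 0)
    (hbdd : ∀ k, 1 ≤ k → ∀ᵐ ω ∂μ, |X k ω| ≤ R)
    (W : ℕ → Ω → ℝ)
    (hW : ∀ ω, W n ω = ∑ k ∈ Finset.Icc 1 n, (μ[(X k) ^ 2 | ℱ (k - 1)]) ω)
    (hWσ : ∀ ω, W n ω ≤ σ ^ 2)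
    (m : ℕ) (hm : 1 ≤ m) :
    ENNReal.ofReal (1 - δ) ≤
      μ {ω | |∑ k ∈ Finset.Icc 1 n, X k ω| ≤
        Real.sqrt (8 * max (W n ω) (σ ^ 2 / 2 ^ m) * Real.log (2 * m / δ)) +
          (4 / 3) * R * Real.log (2 * m / δ)} := by
  set L := Real.log (2 * m / δ) with hLdef
  have hm' : (1:ℝ) ≤ m := by exact_mod_cast hm
  have hq : 1 < 2 * m / δ := by rw [lt_div_iff₀ hδ]; linarith
  have hL : 0 < L := Real.log_pos hq
  have hexp : Real.exp (-L) = δ / (2 * m) := by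
    rw [Real.exp_neg, hLdef, Real.exp_log (by linarith), inv_div]
  have hWm : Measurable (W n) := by
    rw [show W n = fun ω => ∑ k ∈ Finset.Icc 1 n, (μ[(X k) ^ 2 | ℱ (k - 1)]) ω from funext hW]
    exact Finset.measurable_fun_sum _ fun k _ =>
      (stronglyMeasurable_condExp.mono (ℱ.le _)).measurable
  have hSm : Measurable (fun ω => |∑ k ∈ Finset.Icc 1 n, X k ω|) :=
    (Finset.measurable_fun_sum _ fun k _ => hmeas k).abs
  set G := {ω | |∑ k ∈ Finset.Icc 1 n, X k ω| ≤
        Real.sqrt (8 * max (W n ω) (σ ^ 2 / 2 ^ m) * L) + (4 / 3) * R * L} with hG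
  have hGm : MeasurableSet G := by
    refine measurableSet_le hSm (Measurable.add_const ?_ _)
    exact (((hWm.max measurable_const).const_mul 8).mul_const L).sqrt
  suffices hbad : μ Gᶜ ≤ ENNReal.ofReal δ by
    have h1 := prob_add_prob_compl (μ := μ) hGm
    rw [ENNReal.ofReal_sub _ hδ.le, ENNReal.ofReal_one, ← h1]
    exact tsub_le_iff_right.2 (add_le_add le_rfl hbad)
  rcases hR.eq_or_lt with hR0 | hR0
  · have : μ Gᶜ = 0 := by
      have hz : ∀ᵐ ω ∂μ, ∀ k, 1 ≤ k → |X k ω| ≤ R := by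
        rw [ae_all_iff]; intro k
        by_cases hk : 1 ≤ k
        · filter_upwards [hbdd k hk] with ω h _ using h
        · exact Filter.Eventually.of_forall fun ω h => absurd h hk
      change ∀ᵐ ω ∂μ, ω ∈ G
      filter_upwards [hz] with ω h
      have h0 : ∑ k ∈ Finset.Icc 1 n, X k ω = 0 := by
        refine Finset.sum_eq_zero fun k hk => ?_
        have := h k (Finset.mem_Icc.1 hk).1
        rw [← hR0] at this
        exact abs_nonpos_iff.1 this
      simp only [hG, Set.mem_ofPred_eq, h0, abs_zero]
      positivity
    rw [this]; exact zero_le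
  · have hsub : Gᶜ ⊆ ⋃ j ∈ Finset.range m,
        {ω | Real.sqrt (4 * (σ ^ 2 / 2 ^ j) * L) + 4 / 3 * R * L
            < |∑ k ∈ Finset.Icc 1 n, X k ω| ∧
          ∑ k ∈ Finset.Icc 1 n, (μ[(X k) ^ 2 | ℱ (k - 1)]) ω ≤ σ ^ 2 / 2 ^ j} := by
      intro ω hω
      obtain ⟨j, hj, h1, h2⟩ := aux_peel (W n ω) (σ ^ 2) (sq_nonneg _) (hWσ ω) m hm
      simp only [Set.mem_iUnion]
      refine ⟨j, hj, ?_, by rw [← hW]; exact h1⟩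
      simp only [hG, Set.mem_compl_iff, Set.mem_ofPred_eq, not_le] at hω
      refine lt_of_le_of_lt ?_ hω
      gcongr ?_ + _
      apply Real.sqrt_le_sqrt
      apply mul_le_mul_of_nonneg_right _ hL.le
      linarith
    calc μ Gᶜ ≤ _ := measure_mono hsub
      _ ≤ _ := measure_biUnion_finset_le _ _
      _ ≤ ∑ j ∈ Finset.range m, ENNReal.ofReal (2 * Real.exp (-L)) :=
          Finset.sum_le_sum fun j _ => aux_tail μ ℱ X R hR0 hadapted hmeas hmds hbdd n L _ hL
            (by positivity)
      _ = ENNReal.ofReal δ := by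
          rw [Finset.sum_const, Finset.card_range, nsmul_eq_mul, hexp,
            ← ENNReal.ofReal_natCast, ← ENNReal.ofReal_mul (by positivity)]
          congr 1
          field_simp
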